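/- arXiv:1307.0676 — 2 statements merged into one kernel-verified Lean document; each statement's English description precedes it below -/
import Mathlib

section
/- For any pairs 1 ≤ s < t ≤ n and 1 ≤ s' < t' ≤ n, the following are equivalent: (1) there exists a non-split short exact sequence of Λ-modules 0 → (s',t') → E → (s,t) → 0; (2) there exists a non-split short exact sequence of Λ-modules 0 → (s,t) → E → (s',t') → 0; (3) s < s' < t < t' or s' < s < t' < t (that is, the diagonals (P_s,P_t) and (P_{s'},P_{t'}) of the convex n-gon are crossing). -/
set_option synthInstance.maxHeartbeats 1000000
set_option maxHeartbeats 1000000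

open Polynomial Matrix

noncomputable section

/-- The exponent `c_{ij}` (with 0-based indices `i j : Fin n`, corresponding to the 1-based
`c_{i+1,j+1} = δ_{i+1>j+1} + δ_{i+1>j+2} − δ_{(i+1,j+1)=(1,n)}`). -/
def cExp (n : ℕ) (i j : Fin n) : ℤ :=
  (if (j : ℕ) < (i : ℕ) then 1 else 0) + (if (j : ℕ) + 1 < (i : ℕ) then 1 else 0)
    - (if (i : ℕ) = 0 ∧ (j : ℕ) = n - 1 then 1 else 0)

/-- The subset `x^c · K[x]` of `K(x)`. -/
def xPow (K : Type*) [Field K] (c : ℤ) : Set (RatFunc K) :=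
  {f | ∃ p : Polynomial K, f = RatFunc.X ^ c * algebraMap (Polynomial K) (RatFunc K) p}

/-- The carrier set of the tiled order `Λ ⊆ M_n(K(x))`:
matrices whose `(i,j)` entry lies in `x^{c_{ij}}·K[x]`. -/
def lambdaCarrier (K : Type*) [Field K] (n : ℕ) : Set (Matrix (Fin n) (Fin n) (RatFunc K)) :=
  {M | ∀ i j, M i j ∈ xPow K (cExp n i j)}

/-- Exponent pattern of the module `(i,j)` (1-based `i j`; `k : ℕ` is a 0-based coordinate,
so the 1-based coordinate is `k+1`): `0` for `k+1 ≤ i`, `1` for `i < k+1 ≤ j`, `2` otherwise. -/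
def dExp (i j k : ℕ) : ℤ := if k + 1 ≤ i then 0 else if k + 1 ≤ j then 1 else 2

/-- The carrier set of the `Λ`-module `(i,j)` inside the column space `K(x)^n`. -/
def ijSet (K : Type*) [Field K] (n : ℕ) (i j : ℕ) : Set (Fin n → RatFunc K) :=
  {v | ∀ k : Fin n, v k ∈ xPow K (dExp i j (k : ℕ))}

/-- Column vectors form a module over the matrix ring via `mulVec`. -/
instance matVecModule (K : Type*) [Field K] (n : ℕ) :
    Module (Matrix (Fin n) (Fin n) (RatFunc K)) (Fin n → RatFunc K) where
  smul M v := M.mulVec v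
  one_smul v := Matrix.one_mulVec v
  mul_smul M N v := (Matrix.mulVec_mulVec v M N).symm
  smul_zero M := Matrix.mulVec_zero M
  smul_add M u v := Matrix.mulVec_add M u v
  add_smul M N v := Matrix.add_mulVec M N v
  zero_smul v := Matrix.zero_mulVec v

/-- There exists a non-split short exact sequence of `Λ`-modules `0 → Z → B → W → 0`. -/
def ExistsNonSplitExt {K : Type} [Field K] {n : ℕ}
    {Λ : Subalgebra (Polynomial K) (Matrix (Fin n) (Fin n) (RatFunc K))}
    (Z W : Submodule ↥Λ (Fin n → RatFunc K)) : Prop :=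
  ∃ (B : ModuleCat.{0} ↥Λ) (f : ↥Z →ₗ[↥Λ] B) (g : B →ₗ[↥Λ] ↥W),
    Function.Injective f ∧ Function.Surjective g ∧
    LinearMap.range f = LinearMap.ker g ∧
    ¬ ∃ sec : ↥W →ₗ[↥Λ] B, g ∘ₗ sec = LinearMap.id

section Extension

variable {R V Z : Type*} [Ring R] [AddCommGroup V] [Module R V] [AddCommGroup Z] [Module R Z]

theorem LinearMap.exists_comp_eq_of_range_eq_ker {M B W : Type*} [AddCommGroup M] [Module R M]
    [AddCommGroup B] [Module R B] [AddCommGroup W] [Module R W] {f : Z →ₗ[R] B} {g : B →ₗ[R] W}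
    (hf : Function.Injective f) (hfg : LinearMap.range f = LinearMap.ker g) (h : M →ₗ[R] B)
    (hgh : ∀ m, g (h m) = 0) : ∃ k : M →ₗ[R] Z, ∀ m, f (k m) = h m := by
  have hr : ∀ m, h m ∈ LinearMap.range f := fun m => by
    rw [hfg]; exact hgh m
  refine ⟨(LinearEquiv.ofInjective f hf).symm.toLinearMap ∘ₗ h.codRestrict _ hr, fun m => ?_⟩
  have := (LinearEquiv.ofInjective f hf).apply_symm_apply (h.codRestrict _ hr m)
  exact congrArg Subtype.val this

/-- If every map `P ⊓ Q → Z` is a sum of restrictions of maps from the projective submodules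
`P` and `Q`, then every extension of `P ⊔ Q` by `Z` splits. -/
theorem exists_section_of_forall_inf_decomposes {B : Type*} [AddCommGroup B] [Module R B]
    (P Q : Submodule R V) [Module.Projective R P] [Module.Projective R Q]
    (hdec : ∀ φ : ↥(P ⊓ Q) →ₗ[R] Z, ∃ (α : P →ₗ[R] Z) (β : Q →ₗ[R] Z),
      ∀ u : ↥(P ⊓ Q), φ u = α ⟨u, u.2.1⟩ + β ⟨u, u.2.2⟩)
    (f : Z →ₗ[R] B) (g : B →ₗ[R] ↥(P ⊔ Q)) (hf : Function.Injective f)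
    (hg : Function.Surjective g) (hfg : LinearMap.range f = LinearMap.ker g) :
    ∃ sec : ↥(P ⊔ Q) →ₗ[R] B, g ∘ₗ sec = LinearMap.id := by
  obtain ⟨lP, hlP⟩ := Module.projective_lifting_property g
    (Submodule.inclusion (le_sup_left : P ≤ P ⊔ Q)) hg
  obtain ⟨lQ, hlQ⟩ := Module.projective_lifting_property g
    (Submodule.inclusion (le_sup_right : Q ≤ P ⊔ Q)) hg
  have hlP' : ∀ p, g (lP p) = ⟨p, Submodule.mem_sup_left p.2⟩ := fun p => LinearMap.congr_fun hlP p
  have hlQ' : ∀ p, g (lQ p) = ⟨p, Submodule.mem_sup_right p.2⟩ :=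
    fun p => LinearMap.congr_fun hlQ p
  have hgf : ∀ z, g (f z) = 0 := fun z => by
    have : f z ∈ LinearMap.ker g := hfg ▸ LinearMap.mem_range_self f z
    exact this
  obtain ⟨φ, hφ⟩ := LinearMap.exists_comp_eq_of_range_eq_ker hf hfg
    (lP ∘ₗ Submodule.inclusion inf_le_left - lQ ∘ₗ Submodule.inclusion inf_le_right :
      ↥(P ⊓ Q) →ₗ[R] B) (fun m => by simp [hlP', hlQ'])
  obtain ⟨α, β, hαβ⟩ := hdec φ
  let F : V →ₗ.[R] B := ⟨P, lP - f ∘ₗ α⟩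
  let G : V →ₗ.[R] B := ⟨Q, lQ + f ∘ₗ β⟩
  have hFG : ∀ (x : F.domain) (y : G.domain), (x : V) = y → F x = G y := by
    rintro ⟨x, hx⟩ ⟨y, hy⟩ (rfl : x = y)
    have h := hφ ⟨x, hx, hy⟩
    rw [hαβ, map_add] at h
    change lP ⟨x, hx⟩ - f (α ⟨x, hx⟩) = lQ ⟨x, hy⟩ + f (β ⟨x, hy⟩)
    change _ = lP ⟨x, hx⟩ - lQ ⟨x, hy⟩ at h
    rw [sub_eq_iff_eq_add, add_assoc, add_comm (f _) (f _), h]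
    abel
  refine ⟨(F.sup G hFG).toFun, LinearMap.ext fun w => ?_⟩
  obtain ⟨y, hy, z, hz, hyz⟩ := Submodule.mem_sup.1 w.2
  have h := LinearPMap.sup_apply hFG ⟨y, hy⟩ ⟨z, hz⟩ w hyz
  change g ((F.sup G hFG) w) = w
  rw [h]
  change g ((lP ⟨y, hy⟩ - f (α ⟨y, hy⟩)) + (lQ ⟨z, hz⟩ + f (β ⟨z, hz⟩))) = w
  ext1
  simp [hgf, hlP', hlQ', hyz]

/-- If the extension of `P ⊔ Q` by `Z` obtained from `0 → P ⊓ Q → P × Q → P ⊔ Q → 0` by pushing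
out along `φ` splits, then `φ` is a sum of restrictions of maps from `P` and `Q`. -/
theorem inf_decomposes_of_forall_exists_section {R V Z : Type} [Ring R] [AddCommGroup V]
    [Module R V] [AddCommGroup Z] [Module R Z] (P Q : Submodule R V)
    (hsplit : ∀ (B : ModuleCat.{0} R) (f : Z →ₗ[R] B) (g : B →ₗ[R] ↥(P ⊔ Q)),
      Function.Injective f → Function.Surjective g → LinearMap.range f = LinearMap.ker g →
      ∃ sec : ↥(P ⊔ Q) →ₗ[R] B, g ∘ₗ sec = LinearMap.id)
    (φ : ↥(P ⊓ Q) →ₗ[R] Z) : ∃ (α : P →ₗ[R] Z) (β : Q →ₗ[R] Z),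
      ∀ u : ↥(P ⊓ Q), φ u = α ⟨u, u.2.1⟩ + β ⟨u, u.2.2⟩ := by
  let iP : ↥(P ⊓ Q) →ₗ[R] P := Submodule.inclusion inf_le_left
  let iQ : ↥(P ⊓ Q) →ₗ[R] Q := Submodule.inclusion inf_le_right
  let N : Submodule R (Z × P × Q) := LinearMap.range (φ.prod ((-iP).prod iQ))
  let s : (Z × P × Q) →ₗ[R] ↥(P ⊔ Q) :=
    (LinearMap.coprod (Submodule.inclusion le_sup_left) (Submodule.inclusion le_sup_right)) ∘ₗ
      LinearMap.snd R Z (P × Q)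
  have hs : ∀ z p q, ((s (z, p, q) : ↥(P ⊔ Q)) : V) = p + q := fun z p q => rfl
  have hN : N ≤ LinearMap.ker s := by
    rintro _ ⟨u, rfl⟩
    rw [LinearMap.mem_ker]
    ext1
    change (((s (φ u, -iP u, iQ u) : ↥(P ⊔ Q)) : V)) = 0
    rw [hs]
    simp [iP, iQ]
  let f : Z →ₗ[R] (Z × P × Q) ⧸ N := N.mkQ ∘ₗ LinearMap.inl R Z (P × Q)
  let g : ((Z × P × Q) ⧸ N) →ₗ[R] ↥(P ⊔ Q) := N.liftQ s hN
  have hmem : ∀ z p q, (z, p, q) ∈ N ↔ ∃ u : ↥(P ⊓ Q), φ u = z ∧ -iP u = p ∧ iQ u = q := by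
    intro z p q
    simp [N, LinearMap.mem_range, Prod.ext_iff]
  have hf : Function.Injective f := by
    rw [← LinearMap.ker_eq_bot, LinearMap.ker_eq_bot']
    intro z hz
    have hz' : (z, (0 : P), (0 : Q)) ∈ N := (Submodule.Quotient.mk_eq_zero N).1 hz
    obtain ⟨u, hu, -, hu'⟩ := (hmem _ _ _).1 hz'
    have : u = 0 := Subtype.ext (congrArg Subtype.val hu' : (u : V) = 0)
    rw [← hu, this, map_zero]
  have hg : Function.Surjective g := by
    intro w
    obtain ⟨y, hy, z, hz, hyz⟩ := Submodule.mem_sup.1 w.2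
    refine ⟨N.mkQ (0, ⟨y, hy⟩, ⟨z, hz⟩), ?_⟩
    ext1
    exact hyz
  have hfg : LinearMap.range f = LinearMap.ker g := by
    apply le_antisymm
    · rintro _ ⟨z, rfl⟩
      rw [LinearMap.mem_ker]
      ext1
      change (((s (z, 0, 0) : ↥(P ⊔ Q)) : V)) = 0
      rw [hs]; simp
    · intro b hb
      obtain ⟨⟨z, p, q⟩, rfl⟩ := N.mkQ_surjective b
      have hpq : (p : V) + q = 0 := congrArg Subtype.val (LinearMap.mem_ker.1 hb)
      have hqP : (q : V) ∈ P := by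
        rw [eq_neg_of_add_eq_zero_right hpq]; exact P.neg_mem p.2
      refine ⟨z - φ ⟨q, hqP, q.2⟩, ?_⟩
      refine (Submodule.Quotient.eq N).2 ?_
      change (z - φ ⟨q, hqP, q.2⟩ - z, 0 - p, 0 - q) ∈ N
      refine (hmem _ _ _).2 ⟨-⟨q, hqP, q.2⟩, ?_, ?_, ?_⟩
      · rw [map_neg]; abel
      · ext1
        simp [iP, eq_neg_of_add_eq_zero_right hpq]
      · ext1
        simp [iQ]
  obtain ⟨σ, hσ⟩ := hsplit (ModuleCat.of R ((Z × P × Q) ⧸ N)) f g hf hg hfg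
  have hσ' : ∀ w, g (σ w) = w := fun w => LinearMap.congr_fun hσ w
  obtain ⟨α, hα⟩ := LinearMap.exists_comp_eq_of_range_eq_ker hf hfg
    (σ ∘ₗ Submodule.inclusion le_sup_left -
      N.mkQ ∘ₗ LinearMap.inr R Z (P × Q) ∘ₗ LinearMap.inl R P Q) (fun p => by
        rw [LinearMap.sub_apply, map_sub, LinearMap.comp_apply, hσ', sub_eq_zero]
        ext1
        exact (add_zero (p : V)).symm)
  obtain ⟨β, hβ⟩ := LinearMap.exists_comp_eq_of_range_eq_ker hf hfg
    (σ ∘ₗ Submodule.inclusion le_sup_right -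
      N.mkQ ∘ₗ LinearMap.inr R Z (P × Q) ∘ₗ LinearMap.inr R P Q) (fun p => by
        rw [LinearMap.sub_apply, map_sub, LinearMap.comp_apply, hσ', sub_eq_zero]
        ext1
        exact (zero_add (p : V)).symm)
  refine ⟨-α, β, fun u => hf ?_⟩
  have h1 : f (α (iP u)) = σ ⟨u, Submodule.mem_sup_left u.2.1⟩ - N.mkQ (0, iP u, 0) := hα (iP u)
  have h2 : f (β (iQ u)) = σ ⟨u, Submodule.mem_sup_right u.2.2⟩ - N.mkQ (0, 0, iQ u) := hβ (iQ u)
  have h3 : f (φ u) = N.mkQ (0, iP u, 0) - N.mkQ (0, 0, iQ u) := by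
    rw [← map_sub]
    refine (Submodule.Quotient.eq N).2 ((hmem _ _ _).2 ⟨u, ?_, ?_, ?_⟩) <;> simp
  change f (φ u) = f (-α (iP u) + β (iQ u))
  rw [map_add, map_neg, h1, h2, h3]
  abel

end Extension

section PowerLattices

variable {K : Type*} [Field K]

theorem zero_mem_xPow (c : ℤ) : (0 : RatFunc K) ∈ xPow K c := ⟨0, by simp⟩

theorem add_mem_xPow {c : ℤ} {f g : RatFunc K} (hf : f ∈ xPow K c) (hg : g ∈ xPow K c) :
    f + g ∈ xPow K c := by
  obtain ⟨p, rfl⟩ := hf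
  obtain ⟨q, rfl⟩ := hg
  exact ⟨p + q, by rw [map_add, mul_add]⟩

theorem sum_mem_xPow {ι : Type*} {c : ℤ} {f : ι → RatFunc K} (s : Finset ι)
    (hf : ∀ i ∈ s, f i ∈ xPow K c) : ∑ i ∈ s, f i ∈ xPow K c :=
  Finset.sum_induction f (· ∈ xPow K c) (fun _ _ => add_mem_xPow) (zero_mem_xPow c) hf

theorem mul_mem_xPow {c d : ℤ} {f g : RatFunc K} (hf : f ∈ xPow K c) (hg : g ∈ xPow K d) :
    f * g ∈ xPow K (c + d) := by
  obtain ⟨p, rfl⟩ := hf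
  obtain ⟨q, rfl⟩ := hg
  exact ⟨p * q, by rw [zpow_add₀ RatFunc.X_ne_zero, map_mul]; ring⟩

theorem X_zpow_mem_xPow (c : ℤ) : (RatFunc.X ^ c : RatFunc K) ∈ xPow K c := ⟨1, by simp⟩

theorem xPow_antitone {c d : ℤ} (h : c ≤ d) : xPow K d ⊆ xPow K c := by
  rintro _ ⟨p, rfl⟩
  obtain ⟨m, rfl⟩ := Int.le.dest h
  exact ⟨Polynomial.X ^ m * p, by
    rw [zpow_add₀ RatFunc.X_ne_zero, map_mul, map_pow, RatFunc.algebraMap_X, zpow_natCast]; ring⟩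

theorem mem_xPow_of_mul_X_zpow {c m : ℤ} {f : RatFunc K} (h : f * RatFunc.X ^ m ∈ xPow K c) :
    f ∈ xPow K (c - m) := by
  have := mul_mem_xPow h (X_zpow_mem_xPow (-m))
  rwa [mul_assoc, ← zpow_add₀ RatFunc.X_ne_zero, add_neg_cancel, zpow_zero, mul_one] at this

theorem X_zpow_notMem_xPow (c : ℤ) : (RatFunc.X ^ c : RatFunc K) ∉ xPow K (c + 1) := by
  rintro ⟨p, hp⟩
  rw [zpow_add₀ RatFunc.X_ne_zero, mul_assoc, zpow_one] at hp
  have h1 : (1 : RatFunc K) = RatFunc.X * algebraMap K[X] (RatFunc K) p :=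
    mul_left_cancel₀ (zpow_ne_zero c RatFunc.X_ne_zero) (by rw [mul_one]; exact hp)
  rw [← RatFunc.algebraMap_X, ← map_mul, ← map_one (algebraMap K[X] (RatFunc K))] at h1
  have h2 := RatFunc.algebraMap_injective K h1
  exact Polynomial.not_isUnit_X (IsUnit.of_mul_eq_one _ h2.symm)

theorem exists_polynomial_mul_mem_xPow (f : RatFunc K) (c : ℕ) : ∃ q : K[X], q ≠ 0 ∧
    algebraMap K[X] (RatFunc K) q ∈ xPow K c ∧ algebraMap K[X] (RatFunc K) q * f ∈ xPow K c := by
  refine ⟨Polynomial.X ^ c * f.denom, mul_ne_zero (pow_ne_zero _ Polynomial.X_ne_zero)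
    f.denom_ne_zero, ⟨f.denom, by simp⟩, ⟨f.num, ?_⟩⟩
  have hd : algebraMap K[X] (RatFunc K) f.denom ≠ 0 := RatFunc.algebraMap_ne_zero f.denom_ne_zero
  have hf : algebraMap K[X] (RatFunc K) f.denom * f = algebraMap K[X] (RatFunc K) f.num := by
    rw [mul_comm]
    exact ((div_eq_iff hd).1 (RatFunc.num_div_denom f)).symm
  rw [map_mul, map_pow, RatFunc.algebraMap_X, zpow_natCast, mul_assoc, hf]

end PowerLattices

section TiledOrder

variable {K : Type} [Field K] {n : ℕ}
  {Λ : Subalgebra (Polynomial K) (Matrix (Fin n) (Fin n) (RatFunc K))}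

/-- The full `Λ`-lattice of column vectors whose `k`-th entry lies in `x ^ d k · K[x]`. -/
def columnLattice (hΛ : (Λ : Set (Matrix (Fin n) (Fin n) (RatFunc K))) = lambdaCarrier K n)
    (d : Fin n → ℤ) (hd : ∀ k l, d k ≤ cExp n k l + d l) : Submodule ↥Λ (Fin n → RatFunc K) where
  carrier := {v | ∀ k, v k ∈ xPow K (d k)}
  zero_mem' k := zero_mem_xPow _
  add_mem' hu hv k := add_mem_xPow (hu k) (hv k)
  smul_mem' M v hv k := by
    have hM : (M : Matrix (Fin n) (Fin n) (RatFunc K)) ∈ lambdaCarrier K n := hΛ ▸ M.2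
    change ∑ l, (M : Matrix (Fin n) (Fin n) (RatFunc K)) k l * v l ∈ xPow K (d k)
    exact sum_mem_xPow _ fun l _ => xPow_antitone (hd k l) (mul_mem_xPow (hM k l) (hv l))

theorem single_mem_columnLattice
    {hΛ : (Λ : Set (Matrix (Fin n) (Fin n) (RatFunc K))) = lambdaCarrier K n}
    {d : Fin n → ℤ} {hd : ∀ k l, d k ≤ cExp n k l + d l} {j : Fin n} {m : ℤ} (h : d j ≤ m) :
    Pi.single j (RatFunc.X ^ m) ∈ columnLattice hΛ d hd := by
  intro k
  by_cases hk : k = j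
  · subst hk
    rw [Pi.single_eq_same]
    exact xPow_antitone h (X_zpow_mem_xPow m)
  · rw [Pi.single_eq_of_ne hk]
    exact zero_mem_xPow _

theorem mem_columnLattice_sup
    {hΛ : (Λ : Set (Matrix (Fin n) (Fin n) (RatFunc K))) = lambdaCarrier K n}
    {a b : Fin n → ℤ} {ha : ∀ k l, a k ≤ cExp n k l + a l} {hb : ∀ k l, b k ≤ cExp n k l + b l}
    {v : Fin n → RatFunc K} :
    v ∈ columnLattice hΛ a ha ⊔ columnLattice hΛ b hb ↔ ∀ k, v k ∈ xPow K (min (a k) (b k)) := by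
  constructor
  · intro hv k
    obtain ⟨y, hy, z, hz, rfl⟩ := Submodule.mem_sup.1 hv
    exact add_mem_xPow (xPow_antitone (min_le_left _ _) (hy k))
      (xPow_antitone (min_le_right _ _) (hz k))
  · intro hv
    refine Submodule.mem_sup.2 ⟨fun k => if a k ≤ b k then v k else 0, fun k => ?_,
      fun k => if a k ≤ b k then 0 else v k, fun k => ?_, ?_⟩
    · dsimp only
      split_ifs with h
      · simpa [min_eq_left h] using hv k
      · exact zero_mem_xPow _
    · dsimp only
      split_ifs with h
      · exact zero_mem_xPow _
      · simpa [min_eq_right (le_of_not_ge h)] using hv k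
    · ext k
      simp only [Pi.add_apply]
      split_ifs <;> simp

theorem projective_columnLattice
    {hΛ : (Λ : Set (Matrix (Fin n) (Fin n) (RatFunc K))) = lambdaCarrier K n}
    {d : Fin n → ℤ} {hd : ∀ k l, d k ≤ cExp n k l + d l} (j : Fin n) (m : ℤ)
    (hdj : ∀ k, d k = cExp n k j + m) (hm : d j = m) :
    Module.Projective ↥Λ ↥(columnLattice hΛ d hd) := by
  let col (v : Fin n → RatFunc K) : Matrix (Fin n) (Fin n) (RatFunc K) :=
    Matrix.of fun k l => if l = j then v k * RatFunc.X ^ (-m) else 0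
  have hcol : ∀ v ∈ columnLattice hΛ d hd, col v ∈ Λ := by
    intro v hv
    rw [← SetLike.mem_coe, hΛ]
    intro k l
    by_cases hl : l = j
    · subst hl
      have := mul_mem_xPow (hv k) (X_zpow_mem_xPow (-m))
      rw [hdj, add_neg_cancel_right] at this
      simpa [col] using this
    · simpa [col, hl] using zero_mem_xPow _
  let i : ↥(columnLattice hΛ d hd) →ₗ[↥Λ] ↥Λ :=
    { toFun := fun v => ⟨col v, hcol v v.2⟩
      map_add' := fun u v => by
        ext k l
        change col (u + v) k l = col u k l + col v k l
        by_cases hl : l = j <;> simp [col, hl, add_mul]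
      map_smul' := fun M v => by
        ext k l
        change col ((M : Matrix (Fin n) (Fin n) (RatFunc K)).mulVec v) k l =
          ((M : Matrix (Fin n) (Fin n) (RatFunc K)) * col v) k l
        rw [Matrix.mul_apply]
        by_cases hl : l = j
        · simp [col, hl, Matrix.mulVec, dotProduct, Finset.sum_mul, mul_assoc]
        · simp [col, hl] }
  let e : ↥(columnLattice hΛ d hd) :=
    ⟨Pi.single j (RatFunc.X ^ m), single_mem_columnLattice hm.le⟩
  refine Module.Projective.of_split i (LinearMap.toSpanSingleton ↥Λ _ e) ?_
  ext v k
  change (col v).mulVec (Pi.single j (RatFunc.X ^ m)) k = (v : Fin n → RatFunc K) k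
  rw [Matrix.mulVec_single]
  simp [col, mul_assoc, inv_mul_cancel₀ (zpow_ne_zero m (RatFunc.X_ne_zero (K := K)))]

theorem cExp_triangle (hn : 3 ≤ n) (i j k : Fin n) : cExp n i k ≤ cExp n i j + cExp n j k := by
  have := i.2
  have := j.2
  have := k.2
  unfold cExp
  split_ifs <;> omega

theorem dExp_le_cExp_add {i j : ℕ} (hi : 1 ≤ i) (hij : i < j) (hj : j ≤ n) (k l : Fin n) :
    dExp i j k ≤ cExp n k l + dExp i j l := by
  have := k.2
  have := l.2
  unfold cExp dExp
  split_ifs <;> omega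

theorem dExp_eq_min {s t : ℕ} (hs : 1 ≤ s) (hst : s < t) (ht : t ≤ n) {a b : Fin n}
    (ha : (a : ℕ) + 1 = s) (hb : (b : ℕ) + 1 = t) (k : Fin n) :
    dExp s t k = min (cExp n k a) (cExp n k b + 1) := by
  have := k.2
  unfold cExp dExp
  rw [min_def]
  split_ifs <;> omega

theorem dExp_sub_one_le_of_crossing {s t s' t' : ℕ} (hs : 1 ≤ s) (hst : s < t) (ht : t ≤ n)
    (hs' : 1 ≤ s') (hst' : s' < t') (ht' : t' ≤ n) {a b : Fin n}
    (ha : (a : ℕ) + 1 = s) (hb : (b : ℕ) + 1 = t)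
    (h : (s < s' ∧ s' < t ∧ t < t') ∨ (s' < s ∧ s < t' ∧ t' < t)) :
    dExp s' t' a = dExp s' t' b - 1 ∧
      ∀ k : Fin n, dExp s' t' k ≤ dExp s' t' a - 1 + max (cExp n k a) (cExp n k b + 1) := by
  constructor
  · unfold dExp
    split_ifs <;> omega
  · intro k
    have := k.2
    rcases le_total (cExp n k a) (cExp n k b + 1) with hk | hk
    · rw [max_eq_right hk]
      revert hk
      unfold cExp dExp
      split_ifs <;> omega
    · rw [max_eq_left hk]
      revert hk
      unfold cExp dExp
      split_ifs <;> omega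

theorem exists_le_dExp_sub_max_of_not_crossing {s t s' t' : ℕ} (hs : 1 ≤ s) (hst : s < t)
    (ht : t ≤ n) (hs' : 1 ≤ s') (hst' : s' < t') {a b : Fin n}
    (ha : (a : ℕ) + 1 = s) (hb : (b : ℕ) + 1 = t)
    (h : ¬ ((s < s' ∧ s' < t ∧ t < t') ∨ (s' < s ∧ s < t' ∧ t' < t))) :
    ∃ k : Fin n, dExp s' t' a ≤ dExp s' t' k - max (cExp n k a) (cExp n k b + 1) ∨
      dExp s' t' b - 1 ≤ dExp s' t' k - max (cExp n k a) (cExp n k b + 1) := by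
  let k₀ : Fin n := ⟨0, by omega⟩
  let k₁ : Fin n := ⟨s, by omega⟩
  have hm₀ : max (cExp n k₀ a) (cExp n k₀ b + 1) = if t = n then 0 else 1 := by
    clear h
    have e₁ : cExp n k₀ a = 0 := by
      simp only [cExp, k₀, true_and]
      split_ifs <;> omega
    have e₂ : cExp n k₀ b = if t = n then -1 else 0 := by
      simp only [cExp, k₀, true_and]
      split_ifs <;> omega
    rw [e₁, e₂]
    split_ifs <;> rfl
  have hm₁ : max (cExp n k₁ a) (cExp n k₁ b + 1) = 1 := by
    clear h
    simp only [cExp, k₁, max_def]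
    split_ifs <;> omega
  by_cases h₀ : dExp s' t' a ≤ dExp s' t' k₀ - max (cExp n k₀ a) (cExp n k₀ b + 1) ∨
      dExp s' t' b - 1 ≤ dExp s' t' k₀ - max (cExp n k₀ a) (cExp n k₀ b + 1)
  · exact ⟨k₀, h₀⟩
  by_cases h₁ : dExp s' t' a ≤ dExp s' t' k₁ - max (cExp n k₁ a) (cExp n k₁ b + 1) ∨
      dExp s' t' b - 1 ≤ dExp s' t' k₁ - max (cExp n k₁ a) (cExp n k₁ b + 1)
  · exact ⟨k₁, h₁⟩
  rw [hm₀] at h₀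
  rw [hm₁] at h₁
  by_cases htn : t = n
  · exfalso
    rw [if_pos htn] at h₀
    revert h₀ h₁
    simp only [dExp, k₀, k₁]
    split_ifs <;> omega
  · let k₂ : Fin n := ⟨t, by omega⟩
    have hm₂ : max (cExp n k₂ a) (cExp n k₂ b + 1) = 2 := by
      simp only [cExp, k₂, max_def]
      split_ifs <;> omega
    refine ⟨k₂, ?_⟩
    rw [hm₂]
    rw [if_neg htn] at h₀
    revert h₀ h₁
    simp only [dExp, k₀, k₁, k₂]
    split_ifs <;> omega

theorem smul_mulVec_comm_of_scalar (p : RatFunc K) (M : ↥Λ) (v : Fin n → RatFunc K) :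
    p • (M • v) = M • (p • v) :=
  (Matrix.mulVec_smul (M : Matrix (Fin n) (Fin n) (RatFunc K)) p v).symm

/-- Multiplication by a scalar of `K(x)`, as a `Λ`-linear map between lattices. -/
def scalarHom {U Z : Submodule ↥Λ (Fin n → RatFunc K)} (p : RatFunc K)
    (h : ∀ u ∈ U, p • u ∈ Z) : ↥U →ₗ[↥Λ] ↥Z where
  toFun u := ⟨p • (u : Fin n → RatFunc K), h u u.2⟩
  map_add' u v := Subtype.ext (smul_add p (u : Fin n → RatFunc K) v)
  map_smul' M u := Subtype.ext (smul_mulVec_comm_of_scalar p M (u : Fin n → RatFunc K))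

theorem cExp_le_two (i j : Fin n) : cExp n i j ≤ 2 := by
  unfold cExp; split_ifs <;> omega

/-- Every homomorphism from a lattice which is nonzero in some coordinate is multiplication by a
scalar. -/
theorem exists_scalar_of_linearMap
    (hΛ : (Λ : Set (Matrix (Fin n) (Fin n) (RatFunc K))) = lambdaCarrier K n)
    {U Z : Submodule ↥Λ (Fin n → RatFunc K)} (φ : ↥U →ₗ[↥Λ] ↥Z) (w : ↥U) (j : Fin n)
    (hw : (w : Fin n → RatFunc K) j ≠ 0) :
    ∃ p : RatFunc K, ∀ u : ↥U, (φ u : Fin n → RatFunc K) = p • (u : Fin n → RatFunc K) := by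
  refine ⟨(φ w : Fin n → RatFunc K) j / (w : Fin n → RatFunc K) j, fun u => ?_⟩
  ext k
  obtain ⟨q, hq0, hq, hqf⟩ := exists_polynomial_mul_mem_xPow
    ((u : Fin n → RatFunc K) k / (w : Fin n → RatFunc K) j) 2
  have hsingle : ∀ (i l : Fin n) (r : RatFunc K), r ∈ xPow K (2 : ℕ) → Matrix.single i l r ∈ Λ := by
    intro i l r hr
    rw [← SetLike.mem_coe, hΛ]
    intro i' l'
    rw [Matrix.single_apply]
    split_ifs
    · exact xPow_antitone (cExp_le_two _ _) hr
    · exact zero_mem_xPow _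
  set Q := algebraMap K[X] (RatFunc K) q
  have hQ0 : Q ≠ 0 := RatFunc.algebraMap_ne_zero hq0
  let M : ↥Λ := ⟨_, hsingle j k _ hq⟩
  let N : ↥Λ := ⟨_, hsingle j j _ hqf⟩
  have hMN : M • u = N • w := by
    ext i
    change (Matrix.single j k Q).mulVec (u : Fin n → RatFunc K) i =
      (Matrix.single j j (Q * _)).mulVec (w : Fin n → RatFunc K) i
    rw [Matrix.single_mulVec, Matrix.single_mulVec, mul_assoc, div_mul_cancel₀ _ hw]
  have h := congrArg (fun z : ↥Z => (z : Fin n → RatFunc K) j) (congrArg φ hMN)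
  simp only [map_smul] at h
  change (Matrix.single j k Q).mulVec (φ u : Fin n → RatFunc K) j =
      (Matrix.single j j (Q * _)).mulVec (φ w : Fin n → RatFunc K) j at h
  simp only [Matrix.single_mulVec, Function.update_self] at h
  rw [mul_assoc] at h
  rw [mul_left_cancel₀ hQ0 h, Pi.smul_apply, smul_eq_mul]
  ring

theorem existsNonSplitExt_iff_crossing (hn : 3 ≤ n)
    (hΛ : (Λ : Set (Matrix (Fin n) (Fin n) (RatFunc K))) = lambdaCarrier K n)
    {s t s' t' : ℕ} (hs : 1 ≤ s) (hst : s < t) (ht : t ≤ n)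
    (hs' : 1 ≤ s') (hst' : s' < t') (ht' : t' ≤ n)
    {Z W : Submodule ↥Λ (Fin n → RatFunc K)}
    (hZ : (Z : Set (Fin n → RatFunc K)) = ijSet K n s' t')
    (hW : (W : Set (Fin n → RatFunc K)) = ijSet K n s t) :
    ExistsNonSplitExt Z W ↔ ((s < s' ∧ s' < t ∧ t < t') ∨ (s' < s ∧ s < t' ∧ t' < t)) := by
  obtain ⟨a, ha⟩ : ∃ a : Fin n, (a : ℕ) + 1 = s := ⟨⟨s - 1, by omega⟩, Nat.sub_add_cancel hs⟩
  obtain ⟨b, hb⟩ : ∃ b : Fin n, (b : ℕ) + 1 = t :=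
    ⟨⟨t - 1, by omega⟩, Nat.sub_add_cancel (by omega)⟩
  let P : Submodule ↥Λ (Fin n → RatFunc K) :=
    columnLattice hΛ (fun k => cExp n k a) (fun k l => cExp_triangle hn k l a)
  let Q : Submodule ↥Λ (Fin n → RatFunc K) :=
    columnLattice hΛ (fun k => cExp n k b + 1) (fun k l => by
      have := cExp_triangle hn k l b
      omega)
  have haa : cExp n a a = 0 := by
    unfold cExp; split_ifs <;> omega
  have hbb : cExp n b b = 0 := by
    unfold cExp; split_ifs <;> omega
  have : Module.Projective ↥Λ ↥P := projective_columnLattice a 0 (fun k => (add_zero _).symm) haa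
  have : Module.Projective ↥Λ ↥Q := projective_columnLattice b 1 (fun k => rfl) (by omega)
  have hZ' : ∀ v, v ∈ Z ↔ ∀ k : Fin n, v k ∈ xPow K (dExp s' t' k) := fun v => by
    rw [← SetLike.mem_coe, hZ]; rfl
  obtain rfl : W = P ⊔ Q := by
    ext v
    rw [← SetLike.mem_coe, hW, mem_columnLattice_sup]
    exact forall_congr' fun k => by rw [dExp_eq_min hs hst ht ha hb k]
  have hinf : ∀ k : Fin n,
      Pi.single k (RatFunc.X ^ max (cExp n k a) (cExp n k b + 1) : RatFunc K) ∈ P ⊓ Q := fun k =>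
    ⟨single_mem_columnLattice (le_max_left _ _), single_mem_columnLattice (le_max_right _ _)⟩
  have hd := dExp_le_cExp_add hs' hst' ht'
  constructor
  · contrapose
    rintro hcross ⟨B, f, g, hf, hg, hfg, hsec⟩
    refine hsec (exists_section_of_forall_inf_decomposes (Z := ↥Z) (B := B) P Q (fun φ => ?_)
      f g hf hg hfg)
    obtain ⟨k, hk⟩ := exists_le_dExp_sub_max_of_not_crossing hs hst ht hs' hst' ha hb hcross
    obtain ⟨p, hp⟩ := exists_scalar_of_linearMap hΛ φ ⟨_, hinf k⟩ k (by
      simp [zpow_ne_zero _ (RatFunc.X_ne_zero (K := K))])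
    have hpk : p ∈ xPow K (dExp s' t' k - max (cExp n k a) (cExp n k b + 1)) := by
      have h := (hZ' _).1 (φ ⟨_, hinf k⟩).2 k
      rw [hp] at h
      exact mem_xPow_of_mul_X_zpow (by simpa using h)
    rcases hk with hk | hk
    · refine ⟨scalarHom p fun u hu => (hZ' _).2 fun l => ?_, 0, fun u => ?_⟩
      · refine xPow_antitone ?_ (mul_mem_xPow (xPow_antitone hk hpk) (hu l))
        have := hd l a
        dsimp only
        omega
      · ext1
        rw [hp, LinearMap.zero_apply, add_zero]
        rfl
    · refine ⟨0, scalarHom p fun u hu => (hZ' _).2 fun l => ?_, fun u => ?_⟩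
      · refine xPow_antitone ?_ (mul_mem_xPow (xPow_antitone hk hpk) (hu l))
        have := hd l b
        dsimp only
        omega
      · ext1
        rw [hp, LinearMap.zero_apply, zero_add]
        rfl
  · intro hcross
    by_contra hne
    obtain ⟨hab, hmax⟩ := dExp_sub_one_le_of_crossing hs hst ht hs' hst' ht' ha hb hcross
    have hφ : ∀ u ∈ P ⊓ Q, (RatFunc.X ^ (dExp s' t' a - 1) : RatFunc K) • u ∈ Z := by
      refine fun u hu => (hZ' _).2 fun k => ?_
      have huk : u k ∈ xPow K (max (cExp n k a) (cExp n k b + 1)) := by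
        rcases max_choice (cExp n k a) (cExp n k b + 1) with h | h <;> rw [h]
        · exact hu.1 k
        · exact hu.2 k
      exact xPow_antitone (hmax k) (mul_mem_xPow (X_zpow_mem_xPow _) huk)
    obtain ⟨α, β, hαβ⟩ := inf_decomposes_of_forall_exists_section (Z := ↥Z) P Q
      (fun B f g hf hg hfg => by
        by_contra hsec
        exact hne ⟨B, f, g, hf, hg, hfg, hsec⟩) (scalarHom _ hφ)
    have hX : ∀ m : ℤ, (RatFunc.X ^ m : RatFunc K) ≠ 0 := fun m =>
      zpow_ne_zero m RatFunc.X_ne_zero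
    let ea : ↥P := ⟨Pi.single a (RatFunc.X ^ (0 : ℤ)), single_mem_columnLattice haa.le⟩
    let eb : ↥Q := ⟨Pi.single b (RatFunc.X ^ (1 : ℤ)), single_mem_columnLattice (by omega)⟩
    obtain ⟨p, hp⟩ := exists_scalar_of_linearMap hΛ α ea a (by simp [ea])
    obtain ⟨q, hq⟩ := exists_scalar_of_linearMap hΛ β eb b (by simp [eb, RatFunc.X_ne_zero])
    have hpa : p ∈ xPow K (dExp s' t' a) := by
      have h := (hZ' _).1 (α ea).2 a
      rw [hp] at h
      simpa [ea] using h
    have hqb : q ∈ xPow K (dExp s' t' b - 1) := by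
      have h := (hZ' _).1 (β eb).2 b
      rw [hq] at h
      exact mem_xPow_of_mul_X_zpow (by simpa [eb] using h)
    have hsum : (RatFunc.X ^ (dExp s' t' a - 1) : RatFunc K) = p + q := by
      have h := congrArg (fun z : ↥Z => (z : Fin n → RatFunc K) a) (hαβ ⟨_, hinf a⟩)
      simp only [Submodule.coe_add, Pi.add_apply, hp, hq] at h
      change RatFunc.X ^ (dExp s' t' a - 1) * (Pi.single a _ : Fin n → RatFunc K) a =
        p * (Pi.single a _ : Fin n → RatFunc K) a + q * (Pi.single a _ : Fin n → RatFunc K) a at h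
      rw [Pi.single_eq_same, ← add_mul] at h
      exact mul_right_cancel₀ (hX _) h
    refine X_zpow_notMem_xPow (K := K) (dExp s' t' a - 1) ?_
    rw [sub_add_cancel, hsum]
    exact add_mem_xPow hpa (hab ▸ hqb)

end TiledOrder

/-- For pairs `1 ≤ s < t ≤ n` and `1 ≤ s' < t' ≤ n`, the following are equivalent:
(1) there is a non-split short exact sequence `0 → (s',t') → E → (s,t) → 0`;
(2) there is a non-split short exact sequence `0 → (s,t) → E → (s',t') → 0`;
(3) `s < s' < t < t'` or `s' < s < t' < t`, i.e. the diagonals `(P_s,P_t)` and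
`(P_{s'},P_{t'})` of the convex `n`-gon are crossing. -/
theorem statement9 (K : Type) [Field K] (n : ℕ) (hn : 3 ≤ n)
    (Λ : Subalgebra (Polynomial K) (Matrix (Fin n) (Fin n) (RatFunc K)))
    (hΛ : (Λ : Set (Matrix (Fin n) (Fin n) (RatFunc K))) = lambdaCarrier K n)
    (E : ℕ → ℕ → Submodule ↥Λ (Fin n → RatFunc K))
    (hE : ∀ i j : ℕ, 1 ≤ i → i < j → j ≤ n →
      (E i j : Set (Fin n → RatFunc K)) = ijSet K n i j)
    (s t s' t' : ℕ) (hs : 1 ≤ s) (hst : s < t) (ht : t ≤ n)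
    (hs' : 1 ≤ s') (hst' : s' < t') (ht' : t' ≤ n) :
    List.TFAE
      [ExistsNonSplitExt (E s' t') (E s t),
       ExistsNonSplitExt (E s t) (E s' t'),
       ((s < s' ∧ s' < t ∧ t < t') ∨ (s' < s ∧ s < t' ∧ t' < t))] := by
  have h₁ := existsNonSplitExt_iff_crossing hn hΛ hs hst ht hs' hst' ht'
    (hE s' t' hs' hst' ht') (hE s t hs hst ht)
  have h₂ := existsNonSplitExt_iff_crossing hn hΛ hs' hst' ht' hs hst ht
    (hE s t hs hst ht) (hE s' t' hs' hst' ht')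
  tfae_have 1 ↔ 3 := h₁
  tfae_have 2 ↔ 3 := h₂.trans or_comm
  tfae_finish
end
end

section
/- Let G be the n×n matrix over K[x] with G_{1,n−1} = 1, G_{2,n} = 1, G_{i,i−2} = x² for 3 ≤ i ≤ n, and all other entries 0. Then: (a) conjugation λ ↦ G^{−1}·λ·G maps Λ bijectively onto Λ, defining a K[x]-algebra automorphism α of Λ; (b) there exists a K[x]-linear bijection Φ : Λ → Hom_{K[x]}(Λ, K[x]) satisfying Φ(a·µ·α(b)) = a·Φ(µ)·b for all a, b, µ ∈ Λ, where the Λ-bimodule structure on Hom_{K[x]}(Λ, K[x]) is given by (a·f·b)(m) := f(b·m·a). In other words, the twisted bimodule ₁Λ_α is isomorphic to Hom_{K[x]}(Λ, K[x]) as a Λ-bimodule. -/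
set_option synthInstance.maxHeartbeats 1000000
set_option maxHeartbeats 1000000

open Polynomial Matrix

noncomputable section

/-- The matrix `G` (with 0-based indices): `G_{0,n-2} = 1`, `G_{1,n-1} = 1`, and
`G_{i,i-2} = x²` for `2 ≤ i ≤ n-1`, all other entries being `0`.  (In the 1-based indexing of
the paper: `G_{1,n−1} = 1`, `G_{2,n} = 1`, `G_{i,i−2} = x²` for `3 ≤ i ≤ n`.) -/
def Gmat (K : Type*) [Field K] (n : ℕ) : Matrix (Fin n) (Fin n) (RatFunc K) :=
  Matrix.of fun i j =>
    if (i : ℕ) = 0 ∧ (j : ℕ) = n - 2 then 1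
    else if (i : ℕ) = 1 ∧ (j : ℕ) = n - 1 then 1
    else if 2 ≤ (i : ℕ) ∧ (j : ℕ) + 2 = (i : ℕ) then RatFunc.X ^ 2 else 0

/-- Conjugation by an invertible element, restricted to a subalgebra it stabilises. -/
def conjSubalgebraEquiv {R A : Type*} [CommSemiring R] [Semiring A] [Algebra R A]
    (S : Subalgebra R A) (g h : A) (hgh : g * h = 1) (hhg : h * g = 1)
    (hS : ∀ u, h * u * g ∈ S ↔ u ∈ S) : S ≃ₐ[R] S where
  toFun u := ⟨h * u * g, (hS u).2 u.2⟩
  invFun u := ⟨g * u * h, (hS _).1 (by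
    have : h * (g * u * h) * g = (h * g) * u * (h * g) := by simp only [mul_assoc]
    simp [this, hhg])⟩
  left_inv u := Subtype.ext <| by
    have : g * (h * u * g) * h = (g * h) * u * (g * h) := by simp only [mul_assoc]
    simp [this, hgh]
  right_inv u := Subtype.ext <| by
    have : h * (g * u * h) * g = (h * g) * u * (h * g) := by simp only [mul_assoc]
    simp [this, hhg]
  map_mul' u v := Subtype.ext <| by
    have : h * u * g * (h * v * g) = h * u * (g * h) * v * g := by simp only [mul_assoc]
    rw [hgh, mul_one] at this
    simpa only [Subalgebra.coe_mul, mul_assoc] using this.symm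
  map_add' u v := Subtype.ext <| by simp [mul_add, add_mul]
  commutes' r := Subtype.ext <| by
    simp [← Algebra.commutes r h, mul_assoc, hhg]

section Monomial

variable {K : Type*} [Field K]

theorem X_zpow_mul_mem_xPow {c d : ℤ} {f : RatFunc K} :
    RatFunc.X ^ d * f ∈ xPow K (d + c) ↔ f ∈ xPow K c := by
  have hX : (RatFunc.X : RatFunc K) ≠ 0 := RatFunc.X_ne_zero
  simp only [xPow, Set.mem_ofPred_eq, zpow_add₀ hX, mul_assoc,
    mul_right_inj' (zpow_ne_zero d hX)]

variable {ι : Type*} [Fintype ι] [DecidableEq ι]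

/-- The monomial matrix sending the `j`-th basis vector to `X ^ g j` times the `s j`-th one. -/
def monomialMatrix (K : Type*) [Field K] (s : Equiv.Perm ι) (g : ι → ℤ) :
    Matrix ι ι (RatFunc K) :=
  Matrix.of fun i j => if i = s j then RatFunc.X ^ g j else 0

/-- The inverse of `monomialMatrix K s g`. -/
def monomialMatrixInv (K : Type*) [Field K] (s : Equiv.Perm ι) (g : ι → ℤ) :
    Matrix ι ι (RatFunc K) :=
  Matrix.of fun i j => if j = s i then RatFunc.X ^ (-g i) else 0

variable (s : Equiv.Perm ι) (g : ι → ℤ)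

theorem mul_monomialMatrix_apply (A : Matrix ι ι (RatFunc K)) (i j : ι) :
    (A * monomialMatrix K s g) i j = A i (s j) * RatFunc.X ^ g j := by
  simp [Matrix.mul_apply, monomialMatrix]

theorem monomialMatrixInv_mul_apply (A : Matrix ι ι (RatFunc K)) (i j : ι) :
    (monomialMatrixInv K s g * A) i j = RatFunc.X ^ (-g i) * A (s i) j := by
  simp [Matrix.mul_apply, monomialMatrixInv]

theorem monomialMatrixInv_mul_monomialMatrix :
    monomialMatrixInv K s g * monomialMatrix K s g = 1 := by
  have hX : (RatFunc.X : RatFunc K) ≠ 0 := RatFunc.X_ne_zero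
  ext i j
  rw [monomialMatrixInv_mul_apply]
  by_cases h : i = j
  · subst h
    simp [monomialMatrix, zpow_ne_zero _ hX]
  · simp [monomialMatrix, h]

theorem monomialMatrix_inv : (monomialMatrix K s g)⁻¹ = monomialMatrixInv K s g :=
  Matrix.inv_eq_left_inv (monomialMatrixInv_mul_monomialMatrix s g)

theorem monomialMatrixInv_mul_mul_mem_iff (c : ι → ι → ℤ)
    (Λ : Subalgebra K[X] (Matrix ι ι (RatFunc K)))
    (hΛ : ∀ M, M ∈ Λ ↔ ∀ i j, M i j ∈ xPow K (c i j))
    (hc : ∀ i j, c i j + c (s j) i = g j)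
    (M : Matrix ι ι (RatFunc K)) :
    monomialMatrixInv K s g * M * monomialMatrix K s g ∈ Λ ↔ M ∈ Λ := by
  have key (i j : ι) : c i j = g j - g i + c (s i) (s j) := by
    linarith [hc i j, hc (s j) i]
  have hX : (RatFunc.X : RatFunc K) ≠ 0 := RatFunc.X_ne_zero
  have entry (i j : ι) : (monomialMatrixInv K s g * M * monomialMatrix K s g) i j
      = RatFunc.X ^ (g j - g i) * M (s i) (s j) := by
    rw [mul_monomialMatrix_apply, monomialMatrixInv_mul_apply, sub_eq_add_neg, zpow_add₀ hX]
    ring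
  simp only [hΛ, entry]
  rw [← s.forall_congr_right (q := fun i => ∀ j, M i j ∈ xPow K (c i j))]
  refine forall_congr' fun i => ?_
  rw [← s.forall_congr_right (q := fun j => M (s i) j ∈ xPow K (c (s i) j))]
  refine forall_congr' fun j => ?_
  rw [key, X_zpow_mul_mem_xPow]

end Monomial

section Order

variable {K : Type*} [Field K] {ι : Type*} [Fintype ι] [DecidableEq ι]
  (c : ι → ι → ℤ) (Λ : Subalgebra K[X] (Matrix ι ι (RatFunc K)))
  (hΛ : ∀ M, M ∈ Λ ↔ ∀ i j, M i j ∈ xPow K (c i j))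
  (s : Equiv.Perm ι) (g : ι → ℤ)

/-- The order with exponents `c` is free over `K[X]`, with coordinates the entries divided by
the appropriate powers of `X`. -/
def orderCoord : Λ ≃ₗ[K[X]] (ι × ι → K[X]) :=
  (LinearEquiv.ofBijective
    (LinearMap.codRestrict (Subalgebra.toSubmodule Λ)
      { toFun := fun p => Matrix.of fun i j =>
          (RatFunc.X : RatFunc K) ^ c i j * algebraMap K[X] (RatFunc K) (p (i, j))
        map_add' := fun p q => by ext; simp [mul_add]
        map_smul' := fun r p => by ext; simp [Algebra.smul_def, mul_left_comm] }
      (fun p => (hΛ _).2 fun i j => ⟨p (i, j), rfl⟩))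
    ⟨fun p q h => by
      ext1 ⟨i, j⟩
      have h' := congr_fun (congr_fun (congr_arg Subtype.val h) i) j
      exact RatFunc.algebraMap_injective K
        (mul_left_cancel₀ (zpow_ne_zero _ RatFunc.X_ne_zero) h'),
    fun u => by
      choose p hp using (hΛ u.1).1 u.2
      exact ⟨fun k => p k.1 k.2, Subtype.ext <| by ext i j; exact (hp i j).symm⟩⟩).symm

theorem X_zpow_mul_orderCoord (u : Λ) (i j : ι) :
    RatFunc.X ^ c i j * algebraMap K[X] (RatFunc K) (orderCoord c Λ hΛ u (i, j))
      = (u : Matrix ι ι (RatFunc K)) i j :=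
  congr_fun (congr_fun (congr_arg Subtype.val
    ((orderCoord c Λ hΛ).symm_apply_apply u)) i) j

/-- The identification of the order with its `K[X]`-dual induced by the form
`(u, m) ↦ trace (u * G⁻¹ * m)`, where `G = monomialMatrix K s g`. -/
def orderDualEquiv : Λ ≃ₗ[K[X]] (Λ →ₗ[K[X]] K[X]) :=
  orderCoord c Λ hΛ
    ≪≫ₗ LinearEquiv.funCongrLeft K[X] K[X]
      (((Equiv.prodComm ι ι).trans (s.prodCongr (Equiv.refl ι))).symm)
    ≪≫ₗ dotProductEquiv K[X] (ι × ι)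
    ≪≫ₗ (orderCoord c Λ hΛ).dualMap

theorem orderDualEquiv_apply (u m : Λ) :
    orderDualEquiv c Λ hΛ s u m =
      ∑ i, ∑ j, orderCoord c Λ hΛ u (i, j) * orderCoord c Λ hΛ m (s j, i) := by
  rw [← Fintype.sum_prod_type']
  simp only [orderDualEquiv, LinearEquiv.trans_apply, LinearEquiv.dualMap_apply,
    dotProductEquiv_apply_apply, dotProduct]
  exact (Fintype.sum_equiv ((Equiv.prodComm ι ι).trans (s.prodCongr (Equiv.refl ι))) _ _
    fun ⟨i, j⟩ => by simp [LinearEquiv.funCongrLeft_apply, LinearMap.funLeft_apply]).symm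

theorem algebraMap_orderDualEquiv (hc : ∀ i j, c i j + c (s j) i = g j) (u m : Λ) :
    algebraMap K[X] (RatFunc K) (orderDualEquiv c Λ hΛ s u m) =
      Matrix.trace ((u : Matrix ι ι (RatFunc K)) * (monomialMatrixInv K s g * m.1)) := by
  have hX : (RatFunc.X : RatFunc K) ≠ 0 := RatFunc.X_ne_zero
  simp only [orderDualEquiv_apply, map_sum, map_mul, Matrix.trace, Matrix.diag_apply,
    Matrix.mul_apply (M := (u : Matrix ι ι (RatFunc K))), monomialMatrixInv_mul_apply]
  refine Finset.sum_congr rfl fun i _ => Finset.sum_congr rfl fun j _ => ?_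
  rw [← X_zpow_mul_orderCoord c Λ hΛ u, ← X_zpow_mul_orderCoord c Λ hΛ m, ← hc i j, neg_add,
    zpow_add₀ hX, _root_.zpow_neg, _root_.zpow_neg]
  have h1 := zpow_ne_zero (c i j) hX
  have h2 := zpow_ne_zero (c (s j) i) hX
  field_simp

end Order

/-- The cyclic shift `j ↦ j + 2` modulo `n`. -/
def shiftTwo (n : ℕ) (hn : 2 ≤ n) : Equiv.Perm (Fin n) where
  toFun j := ⟨if (j : ℕ) + 2 < n then j + 2 else j + 2 - n, by split_ifs <;> omega⟩
  invFun i := ⟨if 2 ≤ (i : ℕ) then i - 2 else i + n - 2, by split_ifs <;> omega⟩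
  left_inv j := by ext; simp only; split_ifs <;> omega
  right_inv i := by ext; simp only; split_ifs <;> omega

/-- The exponents of the nonzero entries of `Gmat`. -/
def shiftTwoExp (n : ℕ) (j : Fin n) : ℤ := if (j : ℕ) + 2 < n then 2 else 0

theorem Gmat_eq_monomialMatrix (K : Type*) [Field K] (n : ℕ) (hn : 3 ≤ n) :
    Gmat K n = monomialMatrix K (shiftTwo n (by omega)) (shiftTwoExp n) := by
  ext i j
  have := i.2
  have := j.2
  simp only [Gmat, monomialMatrix, Matrix.of_apply, shiftTwo, shiftTwoExp, Equiv.coe_fn_mk,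
    Fin.ext_iff]
  split_ifs <;> first | omega | simp [zpow_ofNat]

theorem cExp_add_cExp_shiftTwo (n : ℕ) (hn : 3 ≤ n) (i j : Fin n) :
    cExp n i j + cExp n (shiftTwo n (by omega) j) i = shiftTwoExp n j := by
  have := i.2
  have := j.2
  simp only [cExp, shiftTwo, shiftTwoExp, Equiv.coe_fn_mk]
  split_ifs <;> first | omega | simp_all

/-- (a) Conjugation by `G` restricts to a `K[x]`-algebra automorphism `α` of `Λ`, and
(b) there is a `K[x]`-linear bijection `Φ : Λ → Hom_{K[x]}(Λ, K[x])` with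
`Φ(a·u·α(b)) = a·Φ(u)·b`, i.e. `Φ(a·u·α(b))(m) = Φ(u)(b·m·a)`; in other words the twisted
bimodule `₁Λ_α` is isomorphic to the `K[x]`-dual of `Λ` as a `Λ`-bimodule. -/
theorem statement12 (K : Type) [Field K] (n : ℕ) (hn : 3 ≤ n)
    (Λ : Subalgebra (Polynomial K) (Matrix (Fin n) (Fin n) (RatFunc K)))
    (hΛ : (Λ : Set (Matrix (Fin n) (Fin n) (RatFunc K))) = lambdaCarrier K n) :
    ∃ α : ↥Λ ≃ₐ[Polynomial K] ↥Λ,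
      (∀ u : ↥Λ, (↑(α u) : Matrix (Fin n) (Fin n) (RatFunc K))
          = (Gmat K n)⁻¹ * (↑u : Matrix (Fin n) (Fin n) (RatFunc K)) * Gmat K n) ∧
      ∃ Φ : ↥Λ ≃ₗ[Polynomial K] (↥Λ →ₗ[Polynomial K] Polynomial K),
        ∀ a b u m : ↥Λ, Φ (a * u * α b) m = Φ u (b * m * a) := by
  have hmem (M : Matrix (Fin n) (Fin n) (RatFunc K)) :
      M ∈ Λ ↔ ∀ i j, M i j ∈ xPow K (cExp n i j) := by
    rw [← SetLike.mem_coe, hΛ]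
    rfl
  have hc := cExp_add_cExp_shiftTwo n hn
  rw [Gmat_eq_monomialMatrix K n hn, monomialMatrix_inv]
  set s := shiftTwo n (by omega)
  set g := shiftTwoExp n
  have hHG := monomialMatrixInv_mul_monomialMatrix (K := K) s g
  have hGH := mul_eq_one_comm.1 hHG
  refine ⟨conjSubalgebraEquiv Λ _ _ hGH hHG
    (monomialMatrixInv_mul_mul_mem_iff s g (cExp n) Λ hmem hc), fun u => rfl,
    orderDualEquiv (cExp n) Λ hmem s, fun a b u m => ?_⟩
  apply RatFunc.algebraMap_injective K
  rw [algebraMap_orderDualEquiv _ _ _ _ g hc, algebraMap_orderDualEquiv _ _ _ _ g hc]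
  set H := monomialMatrixInv K s g
  set G := monomialMatrix K s g
  change Matrix.trace (a.1 * u.1 * (H * b.1 * G) * (H * m.1))
    = Matrix.trace (u.1 * (H * (b.1 * m.1 * a.1)))
  have h1 : a.1 * u.1 * (H * b.1 * G) * (H * m.1)
      = a.1 * (u.1 * H * b.1 * (G * H) * m.1) := by
    simp only [Matrix.mul_assoc]
  rw [h1, hGH, Matrix.trace_mul_comm]
  simp only [Matrix.mul_assoc, Matrix.mul_one]
end
end
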